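/- Let γ ∈ [0,2), d := 2(γ+1)/(2−γ), and let b be the γ-anti-tree over (X, m) with counting measure m ≡ 1 and intrinsic degree path metric ρ. Then there exists C_D > 0 such that for every x ∈ X and all radii r₁, r₂ with max(1, ρ(x,o)) ≤ r₁ ≤ r₂: #B_x(r₂) ≤ C_D · (r₂/r₁)^d · #B_x(r₁). -/

import Mathlib

open scoped BigOperators

/-- Vertex set of the anti-tree with sphere function `s`:
the `k`-th sphere has `s k` elements. -/
def AntiTree (s : ℕ → ℕ) : Type := Σ k : ℕ, Fin (s k)

namespace AntiTree

/-- Standard edge weights of the anti-tree: consecutive spheres are completely connected,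
and there are no other edges. -/
def wt (s : ℕ → ℕ) (x y : AntiTree s) : ℝ :=
  if x.1 + 1 = y.1 ∨ y.1 + 1 = x.1 then 1 else 0

/-- Weighted vertex degree with respect to the counting measure `m ≡ 1`. -/
noncomputable def Deg (s : ℕ → ℕ) (x : AntiTree s) : ℝ := ∑' y : AntiTree s, wt s x y

end AntiTree

/-- Intrinsic degree path (pseudo-)metric of a weighted graph `b` whose weighted degree
function is `D`:  `ρ(x,y)` is the infimum over finite paths from `x` to `y` of
`∑_j min(1/D(x_j), 1/D(x_{j+1}))^{1/2}`. -/
noncomputable def pathMetric {X : Type*} (b : X → X → ℝ) (D : X → ℝ) (x y : X) : ℝ :=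
  sInf { L : ℝ | ∃ (k : ℕ) (p : ℕ → X), p 0 = x ∧ p k = y ∧
    (∀ j < k, 0 < b (p j) (p (j + 1))) ∧
    L = ∑ j ∈ Finset.range k, Real.sqrt (min (1 / D (p j)) (1 / D (p (j + 1)))) }

/-- The intrinsic degree path metric of the anti-tree. -/
noncomputable def AntiTree.rho (s : ℕ → ℕ) : AntiTree s → AntiTree s → ℝ :=
  pathMetric (AntiTree.wt s) (AntiTree.Deg s)

/-- Closed balls with respect to the intrinsic degree path metric. -/
noncomputable def AntiTree.ball (s : ℕ → ℕ) (x : AntiTree s) (r : ℝ) : Set (AntiTree s) :=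
  {y | AntiTree.rho s x y ≤ r}

/-- The sphere function of the `γ`-anti-tree: `s (k-1) = ⌊k ^ γ⌋` for `k ≥ 1`,
i.e. `s k = ⌊(k+1) ^ γ⌋`. -/
noncomputable def gammaSphere (γ : ℝ) : ℕ → ℕ := fun k => ⌊((k : ℝ) + 1) ^ γ⌋₊

namespace AntiTree

/-- The degree of any vertex in the `k`-th sphere. -/
def levelDeg (s : ℕ → ℕ) (k : ℕ) : ℝ := (if k = 0 then 0 else (s (k - 1) : ℝ)) + s (k + 1)

/-- The intrinsic length of any edge between the `k`-th and the `(k+1)`-st sphere. -/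
noncomputable def edgeLength (s : ℕ → ℕ) (k : ℕ) : ℝ :=
  Real.sqrt (min (1 / levelDeg s k) (1 / levelDeg s (k + 1)))

/-- The intrinsic length of a monotone path from the root to the `n`-th sphere. -/
noncomputable def radius (s : ℕ → ℕ) (n : ℕ) : ℝ := ∑ k ∈ Finset.range n, edgeLength s k

/-- The finite set of vertices in the spheres with index in `A`. -/
def levels (s : ℕ → ℕ) (A : Finset ℕ) : Finset (AntiTree s) :=
  A.sigma fun k => (Finset.univ : Finset (Fin (s k)))

theorem mem_levels {s : ℕ → ℕ} {A : Finset ℕ} {x : AntiTree s} : x ∈ levels s A ↔ x.1 ∈ A := by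
  unfold levels
  exact Finset.mem_sigma.trans (by simp)

theorem card_levels (s : ℕ → ℕ) (A : Finset ℕ) : (levels s A).card = ∑ k ∈ A, s k := by
  unfold levels
  exact (Finset.card_sigma _ _).trans (by simp)

theorem Deg_eq_levelDeg (s : ℕ → ℕ) (x : AntiTree s) : Deg s x = levelDeg s x.1 := by
  obtain ⟨k, i⟩ := x
  have h1 : Deg s ⟨k, i⟩ = ∑ y ∈ levels s (Finset.range (k + 2)), wt s ⟨k, i⟩ y := by
    refine tsum_eq_sum fun y hy => ?_
    rw [mem_levels, Finset.mem_range] at hy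
    exact if_neg (by dsimp only; omega)
  have h2 : ∑ y ∈ levels s (Finset.range (k + 2)), wt s ⟨k, i⟩ y =
      ∑ j ∈ Finset.range (k + 2), (s j : ℝ) * (if k + 1 = j ∨ j + 1 = k then 1 else 0) := by
    unfold levels
    refine (Finset.sum_sigma _ _ _).trans (Finset.sum_congr rfl fun j _ => ?_)
    split_ifs with h <;> simp [wt, h]
  rw [h1, h2]
  cases k with
  | zero => simp [levelDeg]
  | succ k =>
    rw [Finset.sum_range_succ, Finset.sum_range_succ, Finset.sum_range_succ,
      Finset.sum_eq_zero]
    · simp [levelDeg]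
    · intro j hj
      rw [Finset.mem_range] at hj
      rw [if_neg (by omega), mul_zero]

theorem edgeLength_nonneg (s : ℕ → ℕ) (k : ℕ) : 0 ≤ edgeLength s k := Real.sqrt_nonneg _

theorem radius_nonneg (s : ℕ → ℕ) (n : ℕ) : 0 ≤ radius s n :=
  Finset.sum_nonneg fun k _ => edgeLength_nonneg s k

theorem radius_succ (s : ℕ → ℕ) (n : ℕ) : radius s (n + 1) = radius s n + edgeLength s n :=
  Finset.sum_range_succ _ _

/-- The lengths of the paths from `x` to `y`. -/
def pathLengths (s : ℕ → ℕ) (x y : AntiTree s) : Set ℝ :=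
  { L : ℝ | ∃ (k : ℕ) (p : ℕ → AntiTree s), p 0 = x ∧ p k = y ∧
    (∀ j < k, 0 < wt s (p j) (p (j + 1))) ∧
    L = ∑ j ∈ Finset.range k, Real.sqrt (min (1 / Deg s (p j)) (1 / Deg s (p (j + 1)))) }

theorem rho_eq_sInf (s : ℕ → ℕ) (x y : AntiTree s) : rho s x y = sInf (pathLengths s x y) := rfl

theorem pathLengths_nonneg {s : ℕ → ℕ} {x y : AntiTree s} {L : ℝ}
    (hL : L ∈ pathLengths s x y) : 0 ≤ L := by
  obtain ⟨k, p, -, -, -, rfl⟩ := hL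
  exact Finset.sum_nonneg fun _ _ => Real.sqrt_nonneg _

theorem rho_le_of_mem {s : ℕ → ℕ} {x y : AntiTree s} {L : ℝ}
    (hL : L ∈ pathLengths s x y) : rho s x y ≤ L :=
  csInf_le ⟨0, fun _ h => pathLengths_nonneg h⟩ hL

theorem rho_self_le (s : ℕ → ℕ) (x : AntiTree s) : rho s x x ≤ 0 :=
  rho_le_of_mem ⟨0, fun _ => x, rfl, rfl, by simp, by simp⟩

theorem rho_nonneg (s : ℕ → ℕ) (x y : AntiTree s) : 0 ≤ rho s x y :=
  Real.sInf_nonneg fun _ h => pathLengths_nonneg h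

theorem adj_of_wt_pos {s : ℕ → ℕ} {x y : AntiTree s} (h : 0 < wt s x y) :
    x.1 + 1 = y.1 ∨ y.1 + 1 = x.1 := by
  by_contra hc
  simp [wt, hc] at h

theorem abs_radius_sub_le_of_adj {s : ℕ → ℕ} {x y : AntiTree s} (h : 0 < wt s x y) :
    |radius s x.1 - radius s y.1| ≤ Real.sqrt (min (1 / Deg s x) (1 / Deg s y)) := by
  rw [Deg_eq_levelDeg, Deg_eq_levelDeg]
  rcases adj_of_wt_pos h with h | h
  · rw [← h, radius_succ, sub_add_cancel_left, abs_neg, abs_of_nonneg (edgeLength_nonneg s _)]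
    rfl
  · rw [← h, radius_succ, add_sub_cancel_left, abs_of_nonneg (edgeLength_nonneg s _), min_comm]
    rfl

theorem abs_radius_sub_le_of_mem {s : ℕ → ℕ} {x y : AntiTree s} {L : ℝ}
    (hL : L ∈ pathLengths s x y) : |radius s x.1 - radius s y.1| ≤ L := by
  obtain ⟨k, p, rfl, rfl, hp, rfl⟩ := hL
  induction k with
  | zero => simp
  | succ k ih =>
    rw [Finset.sum_range_succ]
    exact (abs_sub_le _ (radius s (p k).1) _).trans
      (add_le_add (ih fun j hj => hp j (by omega)) (abs_radius_sub_le_of_adj (hp k (by omega))))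

/-- A walk on the level set lifts to a path with prescribed endpoints. -/
theorem exists_lift {s : ℕ → ℕ} (hs : ∀ k, 0 < s k) {x y : AntiTree s} {k : ℕ} (hk : k ≠ 0)
    {l : ℕ → ℕ} (h0 : l 0 = x.1) (hl : l k = y.1) :
    ∃ p : ℕ → AntiTree s, p 0 = x ∧ p k = y ∧ ∀ j, (p j).1 = l j := by
  refine ⟨fun j => if j = 0 then x else if j = k then y else ⟨l j, ⟨0, hs _⟩⟩, by simp,
    by simp [hk], fun j => ?_⟩
  rcases eq_or_ne j 0 with rfl | h
  · simp [h0]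
  rcases eq_or_ne j k with rfl | h'
  · simp [h, hl]
  · simp [h, h']

theorem radius_add_sub_mem {s : ℕ → ℕ} (hs : ∀ k, 0 < s k) {x y : AntiTree s}
    (h : x.1 < y.1) : radius s y.1 - radius s x.1 ∈ pathLengths s x y := by
  obtain ⟨k, hk⟩ := Nat.exists_eq_add_of_lt h
  obtain ⟨p, hp0, hpk, hp⟩ := exists_lift hs (x := x) (y := y) (k := k + 1) (by omega)
    (l := fun j => x.1 + j) rfl hk.symm
  refine ⟨k + 1, p, hp0, hpk, fun j _ => ?_, ?_⟩
  · simp [wt, hp, add_assoc]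
  · rw [hk, add_assoc, radius, Finset.sum_range_add, radius, add_sub_cancel_left]
    refine Finset.sum_congr rfl fun j _ => ?_
    rw [Deg_eq_levelDeg, Deg_eq_levelDeg, hp, hp]
    rfl

theorem sum_edgeLength_reverse (s : ℕ → ℕ) (n k : ℕ) :
    ∑ j ∈ Finset.range k, edgeLength s (n + k - (j + 1)) = radius s (n + k) - radius s n := by
  rw [radius, Finset.sum_range_add, radius, add_sub_cancel_left,
    ← Finset.sum_range_reflect (fun j => edgeLength s (n + j))]
  refine Finset.sum_congr rfl fun j hj => ?_
  rw [Finset.mem_range] at hj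
  congr 1
  omega

theorem radius_sub_mem {s : ℕ → ℕ} (hs : ∀ k, 0 < s k) {x y : AntiTree s}
    (h : y.1 < x.1) : radius s x.1 - radius s y.1 ∈ pathLengths s x y := by
  obtain ⟨k, hk⟩ := Nat.exists_eq_add_of_lt h
  obtain ⟨p, hp0, hpk, hp⟩ := exists_lift hs (x := x) (y := y) (k := k + 1) (by omega)
    (l := fun j => x.1 - j) rfl (by omega)
  refine ⟨k + 1, p, hp0, hpk, fun j hj => ?_, ?_⟩
  · have : x.1 - (j + 1) + 1 = x.1 - j := by omega
    simp [wt, hp, this]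
  · rw [hk, add_assoc, ← sum_edgeLength_reverse]
    refine Finset.sum_congr rfl fun j hj => ?_
    rw [Finset.mem_range] at hj
    have h1 : y.1 + (k + 1) - (j + 1) + 1 = x.1 - j := by omega
    have h2 : y.1 + (k + 1) - (j + 1) = x.1 - (j + 1) := by omega
    rw [Deg_eq_levelDeg, Deg_eq_levelDeg, hp, hp, edgeLength, h1, h2, min_comm]

/-- The distance between vertices of different spheres. -/
theorem rho_eq_abs_radius_sub {s : ℕ → ℕ} (hs : ∀ k, 0 < s k) {x y : AntiTree s}
    (h : x.1 ≠ y.1) : rho s x y = |radius s x.1 - radius s y.1| := by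
  have hmem : |radius s x.1 - radius s y.1| ∈ pathLengths s x y := by
    rcases h.lt_or_gt with h | h
    · have := radius_add_sub_mem hs h
      rwa [abs_sub_comm, abs_of_nonneg (pathLengths_nonneg this)]
    · have := radius_sub_mem hs h
      rwa [abs_of_nonneg (pathLengths_nonneg this)]
  exact le_antisymm (rho_le_of_mem hmem)
    (le_csInf ⟨_, hmem⟩ fun _ hL => abs_radius_sub_le_of_mem hL)

theorem abs_radius_sub_le_rho {s : ℕ → ℕ} (hs : ∀ k, 0 < s k) (x y : AntiTree s) :
    |radius s x.1 - radius s y.1| ≤ rho s x y := by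
  by_cases h : x.1 = y.1
  · simpa [h] using rho_nonneg s x y
  · exact (rho_eq_abs_radius_sub hs h).ge

end AntiTree

open AntiTree

section GammaAntiTree

variable {γ : ℝ}

theorem one_le_natCast_add_one_rpow (hγ : 0 ≤ γ) (k : ℕ) : 1 ≤ ((k : ℝ) + 1) ^ γ :=
  Real.one_le_rpow (by linarith [k.cast_nonneg (α := ℝ)]) hγ

theorem gammaSphere_pos (hγ : 0 ≤ γ) (k : ℕ) : 0 < gammaSphere γ k :=
  Nat.floor_pos.2 (one_le_natCast_add_one_rpow hγ k)

theorem gammaSphere_le (γ : ℝ) (k : ℕ) : (gammaSphere γ k : ℝ) ≤ ((k : ℝ) + 1) ^ γ :=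
  Nat.floor_le (by positivity)

theorem le_two_mul_gammaSphere (hγ : 0 ≤ γ) (k : ℕ) :
    ((k : ℝ) + 1) ^ γ ≤ 2 * gammaSphere γ k := by
  have h1 : ((k : ℝ) + 1) ^ γ < gammaSphere γ k + 1 := Nat.lt_floor_add_one _
  have h2 : (1 : ℝ) ≤ gammaSphere γ k := by exact_mod_cast gammaSphere_pos hγ k
  linarith

theorem le_two_mul_levelDeg (hγ : 0 ≤ γ) (k : ℕ) :
    ((k : ℝ) + 1) ^ γ ≤ 2 * levelDeg (gammaSphere γ) k := by
  have h1 := le_two_mul_gammaSphere hγ (k + 1)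
  have h2 : ((k : ℝ) + 1) ^ γ ≤ (((k + 1 : ℕ) : ℝ) + 1) ^ γ := by
    push_cast
    gcongr
    linarith
  have h3 : (0 : ℝ) ≤ if k = 0 then 0 else (gammaSphere γ (k - 1) : ℝ) := by
    split_ifs <;> positivity
  unfold levelDeg
  linarith

theorem levelDeg_le (hγ : 0 ≤ γ) (k : ℕ) :
    levelDeg (gammaSphere γ) k ≤ 2 * ((k : ℝ) + 2) ^ γ := by
  have h1 : (gammaSphere γ (k + 1) : ℝ) ≤ ((k : ℝ) + 2) ^ γ := by
    refine (gammaSphere_le γ (k + 1)).trans (le_of_eq ?_)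
    push_cast
    ring_nf
  have h2 : (if k = 0 then 0 else (gammaSphere γ (k - 1) : ℝ)) ≤ ((k : ℝ) + 2) ^ γ := by
    split_ifs with h
    · positivity
    · refine (gammaSphere_le γ (k - 1)).trans ?_
      gcongr
      · exact Nat.sub_le k 1
      · norm_num
  unfold levelDeg
  linarith

theorem add_three_rpow_le (hγ : 0 ≤ γ) (hγ2 : γ < 2) (k : ℕ) :
    ((k : ℝ) + 3) ^ γ ≤ 9 * ((k : ℝ) + 1) ^ γ := by
  have h1 : ((k : ℝ) + 3) ^ γ ≤ (3 * ((k : ℝ) + 1)) ^ γ := by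
    gcongr
    linarith [k.cast_nonneg (α := ℝ)]
  have h2 : (3 : ℝ) ^ γ ≤ 3 ^ (2 : ℝ) :=
    Real.rpow_le_rpow_of_exponent_le (by norm_num) hγ2.le
  rw [Real.mul_rpow (by norm_num) (by positivity)] at h1
  norm_num at h2
  exact h1.trans (by gcongr)

theorem sq_rpow_neg_half (γ : ℝ) (k : ℕ) :
    (((k : ℝ) + 1) ^ (-(γ / 2))) ^ 2 = 1 / ((k : ℝ) + 1) ^ γ := by
  rw [← Real.rpow_natCast, ← Real.rpow_mul (by positivity), one_div,
    ← Real.rpow_neg (by positivity)]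
  congr 1
  push_cast
  ring

theorem edgeLength_le (hγ : 0 ≤ γ) (k : ℕ) :
    edgeLength (gammaSphere γ) k ≤ 2 * ((k : ℝ) + 1) ^ (-(γ / 2)) := by
  refine Real.sqrt_le_iff.2 ⟨by positivity, (min_le_left _ _).trans ?_⟩
  have h := le_two_mul_levelDeg hγ k
  have hp : 0 < ((k : ℝ) + 1) ^ γ := by positivity
  rw [mul_pow, sq_rpow_neg_half, mul_one_div, div_le_div_iff₀ (by linarith) hp]
  linarith

theorem le_edgeLength (hγ : 0 ≤ γ) (hγ2 : γ < 2) (k : ℕ) :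
    ((k : ℝ) + 1) ^ (-(γ / 2)) / 5 ≤ edgeLength (gammaSphere γ) k := by
  have hp : 0 < ((k : ℝ) + 1) ^ γ := by positivity
  have hp' : 0 < (((k + 1 : ℕ) : ℝ) + 1) ^ γ := by positivity
  have h3 := add_three_rpow_le hγ hγ2 k
  have key : ∀ D : ℝ, 0 < D → D ≤ 18 * ((k : ℝ) + 1) ^ γ →
      (((k : ℝ) + 1) ^ (-(γ / 2)) / 5) ^ 2 ≤ 1 / D := fun D hD hle => by
    rw [div_pow, sq_rpow_neg_half, div_div, div_le_div_iff₀ (by positivity) hD]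
    linarith
  refine Real.le_sqrt_of_sq_le (le_min (key _ ?_ ?_) (key _ ?_ ?_))
  · linarith [le_two_mul_levelDeg hγ k]
  · have h : ((k : ℝ) + 2) ^ γ ≤ ((k : ℝ) + 3) ^ γ := by
      gcongr
      norm_num
    linarith [levelDeg_le hγ k]
  · linarith [le_two_mul_levelDeg hγ (k + 1)]
  · have h := levelDeg_le hγ (k + 1)
    push_cast at h
    rw [show (k : ℝ) + 1 + 2 = k + 3 by ring] at h
    linarith

/-- The tangent line inequality for the concave function `t ↦ t ^ a`. -/
theorem add_rpow_le_tangent {a T h : ℝ} (ha0 : 0 ≤ a) (ha1 : a ≤ 1) (hT : 0 < T)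
    (hTh : 0 ≤ T + h) : (T + h) ^ a ≤ T ^ a + a * h * T ^ (a - 1) := by
  have h1 : -1 ≤ h / T := by
    rw [le_div_iff₀ hT]
    linarith
  have h2 := rpow_one_add_le_one_add_mul_self h1 ha0 ha1
  have h3 : T + h = T * (1 + h / T) := by
    field_simp
  rw [h3, Real.mul_rpow hT.le (by linarith), Real.rpow_sub_one hT.ne']
  calc T ^ a * (1 + h / T) ^ a ≤ T ^ a * (1 + a * (h / T)) := by gcongr
    _ = T ^ a + a * h * (T ^ a / T) := by ring

theorem le_radius (hγ : 0 ≤ γ) (hγ2 : γ < 2) (n : ℕ) :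
    (((n : ℝ) + 1) ^ (1 - γ / 2) - 1) / 5 ≤ radius (gammaSphere γ) n := by
  induction n with
  | zero => simp [radius]
  | succ n ih =>
    have h1 := le_edgeLength hγ hγ2 n
    have h2 := add_rpow_le_tangent (a := 1 - γ / 2) (T := (n : ℝ) + 1) (h := 1)
      (by linarith) (by linarith) (by positivity) (by positivity)
    have hu : 0 ≤ ((n : ℝ) + 1) ^ (-(γ / 2)) := by positivity
    rw [show 1 - γ / 2 - 1 = -(γ / 2) by ring] at h2
    rw [radius_succ]
    push_cast
    nlinarith [mul_nonneg hγ hu]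

theorem radius_le (hγ : 0 ≤ γ) (hγ2 : γ < 2) (n : ℕ) :
    radius (gammaSphere γ) n ≤ 2 / (1 - γ / 2) * (n : ℝ) ^ (1 - γ / 2) := by
  have ha : 0 < 1 - γ / 2 := by linarith
  induction n with
  | zero => simp [radius, ha.ne']
  | succ n ih =>
    have h1 := edgeLength_le hγ n
    have h2 := add_rpow_le_tangent (a := 1 - γ / 2) (T := (n : ℝ) + 1) (h := -1)
      ha.le (by linarith) (by positivity) (by simp)
    rw [show 1 - γ / 2 - 1 = -(γ / 2) by ring, add_neg_cancel_right] at h2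
    rw [radius_succ]
    push_cast
    have h3 : 2 / (1 - γ / 2) * (n : ℝ) ^ (1 - γ / 2) ≤ 2 / (1 - γ / 2) *
        (((n : ℝ) + 1) ^ (1 - γ / 2) + (1 - γ / 2) * -1 * ((n : ℝ) + 1) ^ (-(γ / 2))) := by
      gcongr
    have h4 : 2 / (1 - γ / 2) *
        (((n : ℝ) + 1) ^ (1 - γ / 2) + (1 - γ / 2) * -1 * ((n : ℝ) + 1) ^ (-(γ / 2))) =
        2 / (1 - γ / 2) * ((n : ℝ) + 1) ^ (1 - γ / 2) - 2 * ((n : ℝ) + 1) ^ (-(γ / 2)) := by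
      rw [mul_add, show ∀ u : ℝ, 2 / (1 - γ / 2) * ((1 - γ / 2) * -1 * u) =
        -(2 / (1 - γ / 2) * (1 - γ / 2) * u) by intro u; ring, div_mul_cancel₀ _ ha.ne']
      ring
    linarith

theorem ball_subset_levels (hγ : 0 ≤ γ) (hγ2 : γ < 2) {x : AntiTree (gammaSphere γ)} {r : ℝ}
    (hr : 1 ≤ r) (hx : radius (gammaSphere γ) x.1 ≤ r) :
    ball (gammaSphere γ) x r ⊆
      levels (gammaSphere γ) (Finset.range ⌊(11 * r) ^ (1 / (1 - γ / 2))⌋₊) := by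
  intro y hy
  have ha : 0 < 1 - γ / 2 := by linarith
  have h1 := (abs_le.1 ((abs_radius_sub_le_rho (gammaSphere_pos hγ) x y).trans hy)).1
  have h2 := le_radius hγ hγ2 y.1
  have h3 : ((y.1 : ℝ) + 1) ^ (1 - γ / 2) ≤ 11 * r := by linarith
  rw [Finset.mem_coe, mem_levels, Finset.mem_range, Nat.lt_iff_add_one_le,
    Nat.le_floor_iff (by positivity)]
  push_cast
  calc (y.1 : ℝ) + 1 = (((y.1 : ℝ) + 1) ^ (1 - γ / 2)) ^ (1 / (1 - γ / 2)) := by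
        rw [← Real.rpow_mul (by positivity), mul_one_div_cancel ha.ne', Real.rpow_one]
    _ ≤ _ := by gcongr

theorem card_levels_range_floor_le (hγ : 0 ≤ γ) {N : ℝ} (hN : 0 < N) :
    ((levels (gammaSphere γ) (Finset.range ⌊N⌋₊)).card : ℝ) ≤ N ^ (γ + 1) := by
  rw [card_levels]
  push_cast
  have hfl : (⌊N⌋₊ : ℝ) ≤ N := Nat.floor_le hN.le
  calc ∑ k ∈ Finset.range ⌊N⌋₊, (gammaSphere γ k : ℝ)
      ≤ ∑ k ∈ Finset.range ⌊N⌋₊, N ^ γ := by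
        refine Finset.sum_le_sum fun k hk => (gammaSphere_le γ k).trans ?_
        have : ((k + 1 : ℕ) : ℝ) ≤ ⌊N⌋₊ := by exact_mod_cast Finset.mem_range.1 hk
        push_cast at this
        gcongr
        linarith
    _ = ⌊N⌋₊ * N ^ γ := by simp
    _ ≤ N * N ^ γ := by gcongr
    _ = N ^ (γ + 1) := by rw [Real.rpow_add_one hN.ne', mul_comm]

theorem levels_subset_ball (hγ : 0 ≤ γ) {x : AntiTree (gammaSphere γ)} {r : ℝ}
    (hx : radius (gammaSphere γ) x.1 ≤ r) {A : Finset ℕ} (hxA : x.1 ∉ A)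
    (hA : ∀ k ∈ A, radius (gammaSphere γ) k ≤ r) :
    (levels (gammaSphere γ) A : Set (AntiTree (gammaSphere γ))) ⊆ ball (gammaSphere γ) x r := by
  intro y hy
  rw [Finset.mem_coe, mem_levels] at hy
  have hne : x.1 ≠ y.1 := fun h => hxA (h ▸ hy)
  have h1 := radius_nonneg (gammaSphere γ) x.1
  have h2 := radius_nonneg (gammaSphere γ) y.1
  have h3 := hA _ hy
  change rho _ x y ≤ r
  rw [rho_eq_abs_radius_sub (gammaSphere_pos hγ) hne]
  exact abs_le.2 ⟨by linarith, by linarith⟩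

/-- Removing one sphere does not change the order of growth of the volume. -/
theorem le_card_levels_erase (hγ : 0 ≤ γ) (hγ2 : γ < 2) (m n : ℕ) :
    ((m / 2 : ℕ) : ℝ) * (((m : ℝ) + 1) ^ γ / 8) ≤
      ((levels (gammaSphere γ) ((Finset.range (m + 1)).erase n)).card : ℝ) := by
  rw [card_levels]
  push_cast
  have hcard : m / 2 ≤ ((Finset.Icc (m - m / 2) m).erase n).card := by
    have := Finset.pred_card_le_card_erase (s := Finset.Icc (m - m / 2) m) (a := n)
    rw [Nat.card_Icc] at this
    omega
  have hsub : (Finset.Icc (m - m / 2) m).erase n ⊆ (Finset.range (m + 1)).erase n := by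
    refine Finset.erase_subset_erase _ fun k hk => ?_
    rw [Finset.mem_Icc] at hk
    rw [Finset.mem_range]
    omega
  have h4 : (2 : ℝ) ^ γ ≤ 4 := by
    have := Real.rpow_le_rpow_of_exponent_le (x := 2) (by norm_num) hγ2.le
    norm_num at this
    exact this
  calc ((m / 2 : ℕ) : ℝ) * (((m : ℝ) + 1) ^ γ / 8)
      ≤ ((Finset.Icc (m - m / 2) m).erase n).card * (((m : ℝ) + 1) ^ γ / 8) := by gcongr
    _ = ∑ k ∈ (Finset.Icc (m - m / 2) m).erase n, ((m : ℝ) + 1) ^ γ / 8 := by simp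
    _ ≤ ∑ k ∈ (Finset.Icc (m - m / 2) m).erase n, (gammaSphere γ k : ℝ) := by
        refine Finset.sum_le_sum fun k hk => ?_
        have hk' : m + 1 ≤ 2 * (k + 1) := by
          have := (Finset.mem_Icc.1 (Finset.mem_of_mem_erase hk)).1
          omega
        have hk'' : (m : ℝ) + 1 ≤ 2 * ((k : ℝ) + 1) := by exact_mod_cast hk'
        have h5 : ((m : ℝ) + 1) ^ γ ≤ 4 * ((k : ℝ) + 1) ^ γ :=
          calc ((m : ℝ) + 1) ^ γ ≤ (2 * ((k : ℝ) + 1)) ^ γ := by gcongr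
            _ = 2 ^ γ * ((k : ℝ) + 1) ^ γ := Real.mul_rpow (by norm_num) (by positivity)
            _ ≤ _ := by gcongr
        linarith [le_two_mul_gammaSphere hγ k]
    _ ≤ _ := Finset.sum_le_sum_of_subset_of_nonneg hsub fun _ _ _ => by positivity

theorem rpow_le_ncard_ball (hγ : 0 ≤ γ) (hγ2 : γ < 2) {x : AntiTree (gammaSphere γ)} {r : ℝ}
    (hr : 1 ≤ r) (hx : radius (gammaSphere γ) x.1 ≤ r) {m : ℕ}
    (hm : radius (gammaSphere γ) m ≤ r) :
    ((m : ℝ) + 1) ^ (γ + 1) ≤ 32 * ((ball (gammaSphere γ) x r).ncard : ℝ) := by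
  have hfin : (ball (gammaSphere γ) x r).Finite :=
    (Finset.finite_toSet _).subset (ball_subset_levels hγ hγ2 hr hx)
  have hmono : Monotone (radius (gammaSphere γ)) :=
    monotone_nat_of_le_succ fun n => by
      rw [radius_succ]
      linarith [edgeLength_nonneg (gammaSphere γ) n]
  rcases le_or_gt m 1 with h | h
  · have hpos : (1 : ℝ) ≤ (ball (gammaSphere γ) x r).ncard := by
      exact_mod_cast (Set.ncard_pos hfin).2 ⟨x, (rho_self_le _ x).trans (by linarith)⟩
    have h' : (m : ℝ) ≤ 1 := by exact_mod_cast h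
    have : ((m : ℝ) + 1) ^ (γ + 1) ≤ 8 :=
      calc ((m : ℝ) + 1) ^ (γ + 1) ≤ 2 ^ (γ + 1) := by
            gcongr
            linarith
        _ ≤ (2 : ℝ) ^ (3 : ℝ) :=
            Real.rpow_le_rpow_of_exponent_le (by norm_num) (by linarith)
        _ = 8 := by norm_num
    linarith
  · have hsub := levels_subset_ball hγ hx (A := (Finset.range (m + 1)).erase x.1)
      (Finset.notMem_erase _ _) fun k hk =>
        (hmono (Nat.lt_succ_iff.1 (Finset.mem_range.1 (Finset.mem_of_mem_erase hk)))).trans hm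
    have hle := Set.ncard_le_ncard hsub hfin
    rw [Set.ncard_coe_finset] at hle
    have hle' := (le_card_levels_erase hγ hγ2 m x.1).trans (Nat.cast_le.2 hle)
    have hm2 : (m : ℝ) + 1 ≤ 4 * (m / 2 : ℕ) := by
      exact_mod_cast (by omega : m + 1 ≤ 4 * (m / 2))
    rw [Real.rpow_add_one (by positivity)]
    have hp : 0 ≤ ((m : ℝ) + 1) ^ γ := by positivity
    nlinarith [mul_le_mul_of_nonneg_left hm2 hp]

end GammaAntiTree

/-- **Volume doubling for anti-trees.**
For `γ ∈ [0,2)`, `d := 2(γ+1)/(2-γ)`, and the `γ`-anti-tree with root `o`, counting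
measure `m ≡ 1` and intrinsic degree path metric `ρ`, there is `C_D > 0` such that for all
vertices `x` and radii `max(1, ρ(x,o)) ≤ r₁ ≤ r₂`:
`#B_x(r₂) ≤ C_D (r₂/r₁)^d #B_x(r₁)`. -/
theorem gammaAntiTree_volume_doubling (γ : ℝ) (hγ0 : 0 ≤ γ) (hγ2 : γ < 2)
    (o : AntiTree (gammaSphere γ)) (ho : o.1 = 0) :
    ∃ C_D : ℝ, 0 < C_D ∧ ∀ x : AntiTree (gammaSphere γ), ∀ r₁ r₂ : ℝ,
      max 1 (AntiTree.rho (gammaSphere γ) x o) ≤ r₁ → r₁ ≤ r₂ →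
      ((AntiTree.ball (gammaSphere γ) x r₂).ncard : ℝ) ≤
        C_D * (r₂ / r₁) ^ (2 * (γ + 1) / (2 - γ)) *
          ((AntiTree.ball (gammaSphere γ) x r₁).ncard : ℝ) := by
  have ha : 0 < 1 - γ / 2 := by linarith
  set d := 2 * (γ + 1) / (2 - γ) with hd
  have had : 1 / (1 - γ / 2) * (γ + 1) = d := by
    rw [hd]
    have : 2 - γ ≠ 0 := by linarith
    field_simp
  refine ⟨32 * (11 * (2 / (1 - γ / 2))) ^ d, by positivity, fun x r₁ r₂ h1 h2 => ?_⟩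
  obtain ⟨hr1, hxo⟩ := max_le_iff.1 h1
  have hx : radius (gammaSphere γ) x.1 ≤ r₁ := by
    refine (le_of_eq ?_).trans
      ((le_abs_self _).trans ((abs_radius_sub_le_rho (gammaSphere_pos hγ0) x o).trans hxo))
    simp [ho, radius]
  have hr2 : 1 ≤ r₂ := hr1.trans h2
  have hr1' : 0 < r₁ := by linarith
  have hr2' : 0 < r₂ := by linarith
  have hupper : ((ball (gammaSphere γ) x r₂).ncard : ℝ) ≤ (11 * r₂) ^ d := by
    have h := Set.ncard_le_ncard (ball_subset_levels hγ0 hγ2 hr2 (hx.trans h2))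
      (Finset.finite_toSet _)
    rw [Set.ncard_coe_finset] at h
    refine (Nat.cast_le.2 h).trans ((card_levels_range_floor_le hγ0 (by positivity)).trans ?_)
    rw [← Real.rpow_mul (by positivity), had]
  have hlower : (r₁ / (2 / (1 - γ / 2))) ^ d ≤
      32 * ((ball (gammaSphere γ) x r₁).ncard : ℝ) := by
    set M := (r₁ / (2 / (1 - γ / 2))) ^ (1 / (1 - γ / 2)) with hM
    have hM0 : 0 ≤ M := by positivity
    have hm : radius (gammaSphere γ) ⌊M⌋₊ ≤ r₁ :=
      calc radius (gammaSphere γ) ⌊M⌋₊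
          ≤ 2 / (1 - γ / 2) * (⌊M⌋₊ : ℝ) ^ (1 - γ / 2) := radius_le hγ0 hγ2 _
        _ ≤ 2 / (1 - γ / 2) * M ^ (1 - γ / 2) := by
            gcongr
            exact Nat.floor_le hM0
        _ = r₁ := by
            rw [hM, ← Real.rpow_mul (by positivity), one_div_mul_cancel ha.ne', Real.rpow_one,
              mul_div_cancel₀ _ (by positivity)]
    refine le_trans ?_ (rpow_le_ncard_ball hγ0 hγ2 hr1 hx hm)
    rw [← had, Real.rpow_mul (by positivity)]
    gcongr
    exact (Nat.lt_floor_add_one M).le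
  calc ((ball (gammaSphere γ) x r₂).ncard : ℝ) ≤ (11 * r₂) ^ d := hupper
    _ = (11 * (2 / (1 - γ / 2))) ^ d * (r₂ / r₁) ^ d * (r₁ / (2 / (1 - γ / 2))) ^ d := by
        rw [← Real.mul_rpow (by positivity) (by positivity),
          ← Real.mul_rpow (by positivity) (by positivity)]
        have h0 : 2 / (1 - γ / 2) ≠ 0 := by positivity
        generalize 2 / (1 - γ / 2) = c at h0
        congr 1
        field_simp
    _ ≤ (11 * (2 / (1 - γ / 2))) ^ d * (r₂ / r₁) ^ d *
        (32 * ((ball (gammaSphere γ) x r₁).ncard : ℝ)) := by gcongr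
    _ = _ := by ring
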